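/- arXiv:2005.09767 — 2 statements merged into one kernel-verified Lean document; each statement's English description precedes it below -/
import Mathlib

section
/- Let k and q be integers with 0 < k < q, let G=(V,E) be an oriented graph, and let S ⊆ E be a k-base. Then for every function f: E \ S → Z/q there exists a flow φ: E → Z/q satisfying φ(e) ≠ f(e) for every e ∈ E \ S. -/
open scoped Classical

/-- A multigraph with an orientation: each edge `e` has a source `src e` and a target `tgt e`.
Loops and parallel edges are allowed. -/
structure Multigraph (V E : Type) where
  src : E → V
  tgt : E → V

namespace Multigraph

variable {V E : Type}

/-- `u` and `v` are joined by some edge satisfying the predicate `P`. -/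
def adjVia (G : Multigraph V E) (P : E → Prop) (u v : V) : Prop :=
  ∃ e, P e ∧ ((G.src e = u ∧ G.tgt e = v) ∨ (G.src e = v ∧ G.tgt e = u))

/-- `v` is reachable from `u` using only edges satisfying `P`. -/
def Reaches (G : Multigraph V E) (P : E → Prop) : V → V → Prop :=
  Relation.ReflTransGen (G.adjVia P)

/-- The graph is connected when only edges satisfying `P` are kept (all edges deleted
whose predicate fails, all vertices kept). -/
def ConnectedVia (G : Multigraph V E) (P : E → Prop) : Prop :=
  Nonempty V ∧ ∀ u v : V, G.Reaches P u v

def Connected (G : Multigraph V E) : Prop :=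
  G.ConnectedVia fun _ => True

/-- `G` is `k`-edge-connected: it is connected and has no edge cut of size less than `k`;
equivalently, deleting any set of fewer than `k` edges leaves it connected. -/
def EdgeConnected (G : Multigraph V E) (k : ℕ) : Prop :=
  ∀ S : Set E, S.ncard < k → G.ConnectedVia fun e => e ∉ S

/-- The degree of a vertex (loops counted twice). -/
noncomputable def degree (G : Multigraph V E) (v : V) : ℕ :=
  {e | G.src e = v}.ncard + {e | G.tgt e = v}.ncard

/-- Every vertex has degree exactly 3. -/
def Cubic (G : Multigraph V E) : Prop :=
  ∀ v : V, G.degree v = 3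

/-- `φ : E → Γ` is a flow: at every vertex, the sum over outgoing edges equals the
sum over incoming edges. -/
def IsFlow [Fintype E] {Γ : Type} [AddCommGroup Γ] (G : Multigraph V E) (φ : E → Γ) : Prop :=
  ∀ v : V, (∑ e : E, if G.src e = v then φ e else 0) = ∑ e : E, if G.tgt e = v then φ e else 0

/-- The vertex `v` is an endpoint of some edge of `C`. -/
def touches (G : Multigraph V E) (C : Set E) (v : V) : Prop :=
  ∃ e ∈ C, G.src e = v ∨ G.tgt e = v

/-- An edge set `C` is (the edge set of) a cycle: it is nonempty, every vertex it touches
has degree exactly 2 in it, and it is connected. -/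
def IsCycle (G : Multigraph V E) (C : Set E) : Prop :=
  C.Nonempty ∧
  (∀ v : V, G.touches C v →
    ({e ∈ C | G.src e = v}.ncard + {e ∈ C | G.tgt e = v}.ncard = 2)) ∧
  (∀ u v : V, G.touches C u → G.touches C v → G.Reaches (· ∈ C) u v)

/-- `R` is `k`-closed: every cycle with at least one edge outside `R` has at least
`k+1` edges outside `R`. -/
def Closed (G : Multigraph V E) (k : ℕ) (R : Set E) : Prop :=
  ∀ C : Set E, G.IsCycle C → (C \ R).Nonempty → k + 1 ≤ (C \ R).ncard

/-- The `k`-closure `⟨S⟩ₖ` of `S` : the minimal `k`-closed set containing `S`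
(the family of `k`-closed sets is closed under intersections). -/
def kClosure (G : Multigraph V E) (k : ℕ) (S : Set E) : Set E :=
  ⋂₀ {R : Set E | S ⊆ R ∧ G.Closed k R}

/-- `S` is a `k`-base: its `k`-closure is the whole edge set. -/
def IsBase (G : Multigraph V E) (k : ℕ) (S : Set E) : Prop :=
  G.kClosure k S = Set.univ

/-- An edge set `S` is peripheral if `G − S` is connected. -/
def Peripheral (G : Multigraph V E) (S : Set E) : Prop :=
  G.ConnectedVia fun e => e ∉ S

/-- The spanning subgraph `(V, F)` is a forest, i.e. contains no cycle. -/
def IsForest (G : Multigraph V E) (F : Set E) : Prop :=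
  ∀ C : Set E, G.IsCycle C → ¬ C ⊆ F

/-- `vs`, `es` describe a path: distinct vertices `vs 0, …, vs n` and distinct edges
`es 0, …, es (n-1)` where `es i` joins `vs i` and `vs (i+1)`. -/
def IsPath (G : Multigraph V E) {n : ℕ} (vs : Fin (n + 1) → V) (es : Fin n → E) : Prop :=
  Function.Injective vs ∧ Function.Injective es ∧
  ∀ i : Fin n,
    (G.src (es i) = vs i.castSucc ∧ G.tgt (es i) = vs i.succ) ∨
    (G.src (es i) = vs i.succ ∧ G.tgt (es i) = vs i.castSucc)

/-- The edge `e` has `y` as one endpoint and its other endpoint in `X`,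
i.e. `e ∈ E(y, X)`. -/
def joins (G : Multigraph V E) (e : E) (y : V) (X : Set V) : Prop :=
  (G.src e = y ∧ G.tgt e ∈ X) ∨ (G.tgt e = y ∧ G.src e ∈ X)

/-- `W` is the vertex set of a connected component of `G − X`. -/
def IsComponent (G : Multigraph V E) (X W : Set V) : Prop :=
  W.Nonempty ∧ Disjoint W X ∧
  (∀ u ∈ W, ∀ v : V, v ∉ X → G.adjVia (fun _ => True) u v → v ∈ W) ∧
  (∀ u ∈ W, ∀ v ∈ W, G.Reaches (fun e => G.src e ∉ X ∧ G.tgt e ∉ X) u v)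

/-- The subgraph induced on `W`, with only those of its edges satisfying `P` kept,
is connected. -/
def ConnectedOn (G : Multigraph V E) (W : Set V) (P : E → Prop) : Prop :=
  ∀ u ∈ W, ∀ v ∈ W, G.Reaches (fun e => P e ∧ G.src e ∈ W ∧ G.tgt e ∈ W) u v

/-- The subgraph induced on `W` is `k`-edge-connected. -/
def EdgeConnectedOn (G : Multigraph V E) (W : Set V) (k : ℕ) : Prop :=
  ∀ S : Set E, S.ncard < k → G.ConnectedOn W fun e => e ∉ S

/-- Some cycle lies entirely inside the vertex set `X`. -/
def HasCycleIn (G : Multigraph V E) (X : Set V) : Prop :=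
  ∃ C : Set E, G.IsCycle C ∧ ∀ e ∈ C, G.src e ∈ X ∧ G.tgt e ∈ X

/-- The edge cut `E(X, V \ X)`. -/
def cutEdges (G : Multigraph V E) (X : Set V) : Set E :=
  {e | (G.src e ∈ X ∧ G.tgt e ∉ X) ∨ (G.src e ∉ X ∧ G.tgt e ∈ X)}

/-- A cubic graph is cyclically `k`-edge-connected if every edge cut separating two
cycle-containing parts has at least `k` edges. -/
def CyclicallyEdgeConnected (G : Multigraph V E) (k : ℕ) : Prop :=
  ∀ X : Set V, G.HasCycleIn X → G.HasCycleIn Xᶜ → k ≤ (G.cutEdges X).ncard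

/-- `G` is 3-connected: more than 3 vertices, connected, and still connected after
deleting any two vertices. -/
def ThreeConnected [Fintype V] (G : Multigraph V E) : Prop :=
  3 < Fintype.card V ∧ G.Connected ∧
    ∀ u v : V, G.ConnectedOn {w : V | w ≠ u ∧ w ≠ v} fun _ => True

/-- The graph `G − r` obtained by deleting the vertex `r` and all incident edges. -/
def deleteVertex (G : Multigraph V E) (r : V) :
    Multigraph {v : V // v ≠ r} {e : E // G.src e ≠ r ∧ G.tgt e ≠ r} where
  src e := ⟨G.src e.1, e.2.1⟩
  tgt e := ⟨G.tgt e.1, e.2.2⟩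

end Multigraph

/-! Work down from `E` to `S`: a set `R ⊇ S`, `R ≠ E`, is not `k`-closed, so some cycle `C` has
between `1` and `k` edges outside `R`, and by induction some flow avoids `f` outside `R ∪ C`. Adding
to it a flow of value `± c` on the edges of `C` rules out at most one `c` for each edge of `C \ R`,
and there are more than `k` choices of `c`.

The flow around `C` exists because all degrees of `C` are even. Pair up the edge ends at each vertex
and join the two ends of each edge: these are two perfect matchings on the set of edge ends, whose
union is bipartite, and the two colours are the signs of a flow. -/

section Involutions

variable {D : Type*}

theorem exists_sign_of_involutive {α : D → D} (hα : Function.Involutive α) (hne : ∀ d, α d ≠ d) :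
    ∃ σ : D → ℤˣ, ∀ d, σ (α d) = -σ d := by
  let _ : LinearOrder D := linearOrderOfSTO WellOrderingRel
  refine ⟨fun d => if d < α d then 1 else -1, fun d => ?_⟩
  rcases lt_or_gt_of_ne (hne d) with h | h <;> simp [hα d, h, h.not_gt]

theorem semiconjBy_mul_inv_of_mul_self_eq_one {M : Type*} [Group M] {a b : M} (ha : a * a = 1)
    (hb : b * b = 1) : SemiconjBy a (a * b) (a * b)⁻¹ := by
  rw [SemiconjBy, mul_inv_rev, inv_eq_of_mul_eq_one_right ha, inv_eq_of_mul_eq_one_right hb,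
    mul_assoc, ha, ← mul_assoc, ha, one_mul, mul_one]

variable {a b : Equiv.Perm D}

theorem apply_mul_zpow_of_mul_self_eq_one (ha : a * a = 1) (hb : b * b = 1) (n : ℤ) (d : D) :
    a (((a * b) ^ n) d) = ((a * b) ^ (-n)) (a d) := by
  have h := (semiconjBy_mul_inv_of_mul_self_eq_one ha hb).zpow_right n
  rw [inv_zpow'] at h
  exact Equiv.congr_fun h.eq d

theorem sameCycle_mul_apply_of_mul_self_eq_one (ha : a * a = 1) (hb : b * b = 1) {x y : D}
    (h : (a * b).SameCycle x y) : (a * b).SameCycle (a x) (a y) := by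
  obtain ⟨n, rfl⟩ := h
  exact ⟨-n, (apply_mul_zpow_of_mul_self_eq_one ha hb n x).symm⟩

theorem not_sameCycle_mul_apply_of_mul_self_eq_one (ha : a * a = 1) (hb : b * b = 1)
    (hane : ∀ d, a d ≠ d) (hbne : ∀ d, b d ≠ d) (d : D) : ¬ (a * b).SameCycle d (a d) := by
  -- If `(a * b) ^ n` sends `d` to `a d`, then halfway along, `a` or `b` has a fixed point.
  rintro ⟨n, hn⟩
  have hmid (m : ℤ) : a (((a * b) ^ m) d) = ((a * b) ^ (n - m)) d := by
    rw [apply_mul_zpow_of_mul_self_eq_one ha hb, ← hn, ← Equiv.Perm.mul_apply, ← zpow_add,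
      neg_add_eq_sub]
  obtain ⟨m, rfl | rfl⟩ := Int.even_or_odd' n
  · apply hane (((a * b) ^ m) d)
    rw [hmid, two_mul, add_sub_cancel_right]
  · apply hbne (((a * b) ^ m) d)
    apply a.injective
    rw [hmid, show 2 * m + 1 - m = 1 + m by ring, zpow_one_add]
    rfl

theorem exists_sign_of_involutive_of_involutive {α β : D → D}
    (hα : Function.Involutive α) (hβ : Function.Involutive β)
    (hαne : ∀ d, α d ≠ d) (hβne : ∀ d, β d ≠ d) :
    ∃ σ : D → ℤˣ, (∀ d, σ (α d) = -σ d) ∧ ∀ d, σ (β d) = -σ d := by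
  -- `α` acts freely on the orbits of `α ∘ β`, and `β d` lies in the same orbit as `α d`.
  let a := hα.toPerm
  let b := hβ.toPerm
  have ha : a * a = 1 := Equiv.ext hα
  have hb : b * b = 1 := Equiv.ext hβ
  let s := Equiv.Perm.SameCycle.setoid (a * b)
  let onOrbits : Quotient s → Quotient s :=
    Quotient.map α fun _ _ => sameCycle_mul_apply_of_mul_self_eq_one ha hb
  have hinv : Function.Involutive onOrbits :=
    Quotient.ind fun d => congrArg (Quotient.mk s) (hα d)
  have hne : ∀ o, onOrbits o ≠ o := Quotient.ind fun d h =>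
    not_sameCycle_mul_apply_of_mul_self_eq_one ha hb hαne hβne d (Quotient.exact h).symm
  obtain ⟨σ, hσ⟩ := exists_sign_of_involutive hinv hne
  refine ⟨fun d => σ (Quotient.mk s d), fun d => hσ (Quotient.mk s d), fun d => ?_⟩
  have horbit : Quotient.mk s (β d) = Quotient.mk s (α d) := by
    refine Quotient.sound ⟨1, ?_⟩
    rw [zpow_one]
    exact congrArg α (hβ d)
  dsimp only
  rw [horbit]
  exact hσ (Quotient.mk s d)

theorem exists_involutive_of_even_card [Finite D] (h : Even (Nat.card D)) :
    ∃ β : D → D, Function.Involutive β ∧ ∀ d, β d ≠ d := by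
  obtain ⟨m, hm⟩ := h
  obtain ⟨halves⟩ : Nonempty (D ≃ Fin m ⊕ Fin m) := Finite.card_eq.1 (by simp [hm])
  refine ⟨fun d => halves.symm (halves d).swap, fun d => by simp, fun d h => ?_⟩
  rw [Equiv.symm_apply_eq] at h
  cases hd : halves d <;> simp [hd] at h

theorem exists_involutive_of_even_card_fiber {V : Type*} [Finite D] (g : D → V)
    (h : ∀ v, Even (Nat.card {d // g d = v})) :
    ∃ β : D → D, Function.Involutive β ∧ (∀ d, β d ≠ d) ∧ ∀ d, g (β d) = g d := by
  choose β hβ hne using fun v => exists_involutive_of_even_card (h v)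
  have hcast (v : V) (x : {d // g d = v}) : (β (g x) ⟨x, rfl⟩ : D) = β v x := by
    obtain ⟨d, rfl⟩ := x
    rfl
  refine ⟨fun d => β (g d) ⟨d, rfl⟩, fun d => ?_, fun d h => hne _ _ (Subtype.ext h),
    fun d => (β (g d) ⟨d, rfl⟩).2⟩
  dsimp only
  rw [hcast, hβ]

end Involutions

namespace Multigraph

variable {V E : Type} {G : Multigraph V E}

section Flow

variable [Fintype E] {Γ : Type} [AddCommGroup Γ]

theorem isFlow_zero : G.IsFlow (0 : E → Γ) := fun v => by simp

theorem IsFlow.add {φ ψ : E → Γ} (hφ : G.IsFlow φ) (hψ : G.IsFlow ψ) : G.IsFlow (φ + ψ) := by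
  simp only [IsFlow, ← Finset.sum_filter] at hφ hψ ⊢
  intro v
  simp only [Pi.add_apply, Finset.sum_add_distrib, hφ v, hψ v]

theorem IsFlow.map {Γ' : Type} [AddCommGroup Γ'] {φ : E → Γ} (hφ : G.IsFlow φ) (F : Γ →+ Γ') :
    G.IsFlow (F ∘ φ) := by
  simp only [IsFlow, ← Finset.sum_filter] at hφ ⊢
  intro v
  simpa only [map_sum, Function.comp_apply] using congrArg F (hφ v)

end Flow

section EvenDegree

/-- The spanning subgraph of `G` with edge set `C`. It keeps all vertices of `G`, so that a cycle of
`G` becomes a graph with all degrees `0` or `2`. -/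
def restrict (G : Multigraph V E) (C : Set E) : Multigraph V C where
  src e := G.src e
  tgt e := G.tgt e

theorem degree_restrict (C : Set E) (v : V) :
    (G.restrict C).degree v = {e ∈ C | G.src e = v}.ncard + {e ∈ C | G.tgt e = v}.ncard := by
  have hcard (p : E → Prop) : {e : C | p e}.ncard = {e ∈ C | p e}.ncard := by
    rw [← Set.ncard_image_of_injective _ Subtype.val_injective]
    exact congrArg Set.ncard (Subtype.image_preimage_coe C {e | p e})
  exact congrArg₂ _ (hcard fun e => G.src e = v) (hcard fun e => G.tgt e = v)

theorem IsCycle.even_degree_restrict {C : Set E} (hC : G.IsCycle C) (v : V) :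
    Even ((G.restrict C).degree v) := by
  rw [degree_restrict]
  by_cases hv : G.touches C v
  · rw [hC.2.1 v hv]
    exact even_two
  · have hsrc : {e ∈ C | G.src e = v} = ∅ :=
      Set.eq_empty_of_forall_notMem fun e he => hv ⟨e, he.1, .inl he.2⟩
    have htgt : {e ∈ C | G.tgt e = v} = ∅ :=
      Set.eq_empty_of_forall_notMem fun e he => hv ⟨e, he.1, .inr he.2⟩
    simp [hsrc, htgt]

theorem IsFlow.extend_zero [Fintype E] {Γ : Type} [AddCommGroup Γ] {C : Set E} {φ : C → Γ}
    (hφ : (G.restrict C).IsFlow φ) : G.IsFlow (Function.extend Subtype.val φ 0) := by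
  have hsum (p : E → Prop) : (∑ e, if p e then Function.extend Subtype.val φ 0 e else 0) =
      ∑ e : C, if p e then φ e else 0 := by
    refine (Fintype.sum_of_injective _ Subtype.val_injective _ _ (fun e he => ?_) fun e => ?_).symm
    · rw [Function.extend_apply' _ _ _ he, Pi.zero_apply, ite_self]
    · rw [Subtype.val_injective.extend_apply]
  intro v
  rw [hsum fun e => G.src e = v, hsum fun e => G.tgt e = v]
  exact hφ v

-- `E ⊕ E` is the set of edge ends: `inl e` is the end of `e` at its source, `inr e` at its target.
theorem card_ends_eq_degree [Finite E] (G : Multigraph V E) (v : V) :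
    Nat.card {d : E ⊕ E // Sum.elim G.src G.tgt d = v} = G.degree v := by
  rw [Nat.card_congr Equiv.subtypeSum, Nat.card_sum]
  rfl

theorem exists_isFlow_units_of_even_degree [Fintype E] (hG : ∀ v, Even (G.degree v)) :
    ∃ ψ : E → ℤˣ, G.IsFlow fun e => (ψ e : ℤ) := by
  obtain ⟨β, hβ, hβne, hβend⟩ := exists_involutive_of_even_card_fiber (Sum.elim G.src G.tgt)
    fun v => by simpa only [card_ends_eq_degree] using hG v
  obtain ⟨σ, hσswap, hσβ⟩ := exists_sign_of_involutive_of_involutive (α := Sum.swap (α := E))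
    Sum.swap_swap hβ (fun d => by cases d <;> simp) hβne
  refine ⟨fun e => σ (.inl e), fun v => ?_⟩
  have hsum : ∑ d, (if Sum.elim G.src G.tgt d = v then (σ d : ℤ) else 0) = 0 := by
    refine Finset.sum_involution (fun d _ => β d) (fun d _ => ?_) (fun d _ _ => hβne d)
      (fun d _ => Finset.mem_univ _) fun d _ => hβ d
    rw [hβend, hσβ, Units.val_neg]
    split_ifs <;> simp
  have hsplit : (∑ e, if G.src e = v then (σ (.inl e) : ℤ) else 0) +
      (∑ e, if G.tgt e = v then (σ (.inr e) : ℤ) else 0) = 0 :=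
    (Fintype.sum_sum_type _).symm.trans hsum
  have hinr (e : E) : σ (.inr e) = -σ (.inl e) := hσswap (.inl e)
  simp only [hinr, Units.val_neg, ← Finset.sum_filter, Finset.sum_neg_distrib,
    add_neg_eq_zero] at hsplit
  simpa only [Finset.sum_filter] using hsplit

theorem IsCycle.exists_isFlow_units [Fintype E] {C : Set E} (hC : G.IsCycle C) :
    ∃ ψ : E → ℤ, G.IsFlow ψ ∧ (∀ e ∈ C, IsUnit (ψ e)) ∧ ∀ e ∉ C, ψ e = 0 := by
  obtain ⟨ψ, hψ⟩ := exists_isFlow_units_of_even_degree hC.even_degree_restrict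
  refine ⟨_, hψ.extend_zero, fun e he => ?_, fun e he => ?_⟩
  · lift e to C using he
    rw [Subtype.val_injective.extend_apply]
    exact (ψ e).isUnit
  · exact Function.extend_apply' _ _ _ (by simpa using he)

end EvenDegree

theorem IsCycle.exists_isFlow_avoiding [Fintype E] {Γ : Type} [AddCommGroup Γ] {C R : Set E}
    (hC : G.IsCycle C) (hcard : (C \ R).encard < ENat.card Γ) {f φ : E → Γ} (hφ : G.IsFlow φ)
    (havoid : ∀ e ∉ R ∪ C, φ e ≠ f e) : ∃ φ' : E → Γ, G.IsFlow φ' ∧ ∀ e ∉ R, φ' e ≠ f e := by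
  obtain ⟨ψ, hψ, hunit, hzero⟩ := hC.exists_isFlow_units
  -- As `ψ e` is its own inverse on `C`, only `c = ψ e • (f e - φ e)` gives `φ e + ψ e • c = f e`.
  obtain ⟨c, hc⟩ : ∃ c, c ∉ (fun e => ψ e • (f e - φ e)) '' (C \ R) := by
    by_contra! hall
    have hle := Set.encard_image_le (fun e => ψ e • (f e - φ e)) (C \ R)
    rw [Set.eq_univ_of_forall hall, Set.encard_univ] at hle
    exact hle.not_gt hcard
  refine ⟨_, hφ.add (hψ.map (zmultiplesHom Γ c)), fun e he h => ?_⟩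
  replace h : φ e + ψ e • c = f e := h
  by_cases heC : e ∈ C
  · refine hc ⟨e, ⟨heC, he⟩, ?_⟩
    dsimp only
    rw [← h, add_sub_cancel_left, ← mul_smul, Int.isUnit_mul_self (hunit e heC), one_smul]
  · exact havoid e (by simp [he, heC]) (by simpa [hzero e heC] using h)

theorem induction_of_closed [Finite E] {k : ℕ} {S : Set E} {P : Set E → Prop}
    (closed : ∀ R, S ⊆ R → G.Closed k R → P R)
    (cycle : ∀ R C, G.IsCycle C → (C \ R).ncard ≤ k → P (R ∪ C) → P R) : P S := by
  suffices h : ∀ R, S ⊆ R → P R from h S subset_rfl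
  intro R
  induction R using WellFoundedGT.induction with
  | ind R ih =>
    intro hSR
    by_cases hR : G.Closed k R
    · exact closed R hSR hR
    · simp only [Closed, not_forall, not_le, Nat.lt_succ_iff] at hR
      obtain ⟨C, hC, ⟨e, heC, heR⟩, hcard⟩ := hR
      have hlt : R < R ∪ C := Set.ssubset_iff_exists.2 ⟨Set.subset_union_left, e, .inr heC, heR⟩
      exact cycle R C hC hcard (ih _ hlt (hSR.trans Set.subset_union_left))

theorem IsBase.eq_univ_of_closed {k : ℕ} {S R : Set E} (hS : G.IsBase k S) (hSR : S ⊆ R)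
    (hR : G.Closed k R) : R = Set.univ :=
  Set.univ_subset_iff.1 (hS.symm.subset.trans (Set.sInter_subset_of_mem ⟨hSR, hR⟩))

end Multigraph

theorem kBase_gives_flow_avoiding_f_general {V E Γ : Type} [Fintype E] [AddCommGroup Γ]
    {G : Multigraph V E} {k : ℕ} (hk : k < ENat.card Γ) {S : Set E} (hS : G.IsBase k S)
    (f : E → Γ) : ∃ φ : E → Γ, G.IsFlow φ ∧ ∀ e ∉ S, φ e ≠ f e := by
  refine Multigraph.induction_of_closed (G := G) (k := k)
    (P := fun R => ∃ φ : E → Γ, G.IsFlow φ ∧ ∀ e ∉ R, φ e ≠ f e) (fun R hSR hR => ?_)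
    fun R C hC hcard ⟨φ, hφ, havoid⟩ => ?_
  · exact ⟨0, Multigraph.isFlow_zero, by simp [hS.eq_univ_of_closed hSR hR]⟩
  · have hlt : (C \ R).encard < ENat.card Γ := by
      rw [← (Set.toFinite (C \ R)).cast_ncard_eq]
      exact (Nat.cast_le.2 hcard).trans_lt hk
    exact hC.exists_isFlow_avoiding hlt hφ havoid

/-- If `0 < k < q` and `S` is a `k`-base of `G`, then for every `f : E → ℤ_q` there is a
flow `φ : E → ℤ_q` with `φ(e) ≠ f(e)` for every edge `e ∉ S`. -/
theorem kBase_gives_flow_avoiding_f {V E : Type} [Fintype V] [Fintype E]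
    (G : Multigraph V E) (k q : ℕ) (hk : 0 < k) (hkq : k < q)
    (S : Set E) (hS : G.IsBase k S) (f : E → ZMod q) :
    ∃ φ : E → ZMod q, G.IsFlow φ ∧ ∀ e : E, e ∉ S → φ e ≠ f e := by
  have : NeZero q := ⟨by omega⟩
  exact kBase_gives_flow_avoiding_f_general (by simpa [ENat.card_eq_coe_fintype_card]) hS f
end

section
/- Every oriented 3-edge-connected graph is Z/6-connected; that is, for every oriented 3-edge-connected graph G=(V,E) and every function f: E → Z/6 there exists a flow φ: E → Z/6 with φ(e) ≠ f(e) for every e ∈ E. -/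
open scoped Classical

/-!
Identify `ℤ/6` with `ℤ/2 × ℤ/3`. If deleting `S` leaves `G` connected, then prescribed values on
`S` can be avoided over any nontrivial group, by routing the resulting imbalance through `G - S`.
So it suffices to find such an `S` off which prescribed values can be avoided over any group with at
least three elements.

`S` is a union of ears. Starting from a single vertex, grow a set `X`: each ear is a connected piece
outside `X` whose vertices are joined to `X` by two edges `d ≠ d'`. Given a function conserved off
the enlarged set, the edges of the ear together with `d` restore conservation on the ear, and a
circulation of `G / X` through `d` and `d'` leaves a free parameter in the group, of which
`f d` and `f d'` exclude only one value each. The edges of the ear themselves go into `S`.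

The deletion of the ears must not disconnect `G`. Inside a component `W` of `G - X`, take an edge
set `F` joining two boundary edges of `W` for which the component `K` of a fixed vertex in `W - F`
is maximal. If `K ≠ W`, let `B` be a component of `W \ K`. Rerouting `F` through `B` would free the
edges between `K` and `B`, so by maximality no connection survives such a rerouting; this forces
every edge of the cut around `B` to be the first edge through which `F` enters `B` from one of its
two ends. A cut of size two contradicts 3-edge-connectivity.
-/

namespace Multigraph

variable {V E : Type} {G : Multigraph V E} {P P' : E → Prop} {S F : Set E}
  {d d' e f g g' : E} {a b c p p' r u v w z : V} {B Q W W' X : Set V}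

/-! ### Reachability -/

/-- The edge `e` has endpoints `a` and `b`, in either direction. -/
def IsLink (G : Multigraph V E) (e : E) (a b : V) : Prop :=
  (G.src e = a ∧ G.tgt e = b) ∨ (G.src e = b ∧ G.tgt e = a)

/-- The edges with both endpoints in `W`. -/
def edgesIn (G : Multigraph V E) (W : Set V) : Set E :=
  {e | G.src e ∈ W ∧ G.tgt e ∈ W}

/-- The vertices reachable from `z` through edges satisfying `P`. -/
def component (G : Multigraph V E) (P : E → Prop) (z : V) : Set V :=
  {u | G.Reaches P z u}

lemma IsLink.symm (h : G.IsLink e a b) : G.IsLink e b a := Or.symm h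

lemma isLink_src_tgt (G : Multigraph V E) (e : E) : G.IsLink e (G.src e) (G.tgt e) :=
  Or.inl ⟨rfl, rfl⟩

lemma IsLink.mem_edgesIn_iff (h : G.IsLink e a b) : e ∈ G.edgesIn W ↔ a ∈ W ∧ b ∈ W := by
  rcases h with ⟨rfl, rfl⟩ | ⟨rfl, rfl⟩
  · rfl
  · exact and_comm

lemma edgesIn_mono (h : W ⊆ W') : G.edgesIn W ⊆ G.edgesIn W' :=
  fun _ he => ⟨h he.1, h he.2⟩

lemma IsLink.reaches (h : G.IsLink e a b) (he : P e) : G.Reaches P a b :=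
  Relation.ReflTransGen.single ⟨e, he, h⟩

lemma reaches_refl (G : Multigraph V E) (P : E → Prop) (u : V) : G.Reaches P u u :=
  Relation.ReflTransGen.refl

lemma Reaches.trans (h : G.Reaches P u v) (h' : G.Reaches P v w) : G.Reaches P u w :=
  Relation.ReflTransGen.trans h h'

lemma Reaches.induction {motive : V → Prop} (h : G.Reaches P u v) (base : motive u)
    (step : ∀ e a b, P e → G.IsLink e a b → G.Reaches P u a → motive a → motive b) :
    motive v := by
  induction h with
  | refl => exact base
  | tail hua hab ih =>
    obtain ⟨e, he, hl⟩ := hab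
    exact step e _ _ he hl hua ih

lemma Reaches.symm (h : G.Reaches P u v) : G.Reaches P v u :=
  h.induction (motive := fun v => G.Reaches P v u) (reaches_refl G P u) fun _ _ _ he hl _ ih =>
    (hl.symm.reaches he).trans ih

lemma Reaches.bind (h : G.Reaches P u v)
    (hP : ∀ e, P e → G.Reaches P' (G.src e) (G.tgt e)) : G.Reaches P' u v := by
  refine h.induction (reaches_refl G P' u) fun e a b he hl _ ih => ih.trans ?_
  rcases hl with ⟨rfl, rfl⟩ | ⟨rfl, rfl⟩
  · exact hP e he
  · exact (hP e he).symm

lemma Reaches.mono (hP : ∀ e, P e → P' e) (h : G.Reaches P u v) : G.Reaches P' u v :=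
  h.bind fun e he => (isLink_src_tgt G e).reaches (hP e he)

lemma ConnectedOn.mono (hP : ∀ e, P e → P' e) (h : G.ConnectedOn W P) : G.ConnectedOn W P' :=
  fun u hu v hv => (h u hu v hv).mono fun e he => ⟨hP e he.1, he.2⟩

lemma self_mem_component (G : Multigraph V E) (P : E → Prop) (z : V) : z ∈ G.component P z :=
  reaches_refl G P z

lemma IsLink.mem_component (h : G.IsLink e a b) (he : P e) (ha : a ∈ G.component P z) :
    b ∈ G.component P z :=
  Reaches.trans ha (h.reaches he)

lemma component_subset (hz : z ∈ W) (hP : ∀ e, P e → e ∈ G.edgesIn W) :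
    G.component P z ⊆ W := fun _ hu =>
  Reaches.induction hu hz fun e _ _ he hl _ _ => (hl.mem_edgesIn_iff.1 (hP e he)).2

lemma connectedOn_component (G : Multigraph V E) (P : E → Prop) (z : V) :
    G.ConnectedOn (G.component P z) P := by
  have from_root : ∀ u ∈ G.component P z,
      G.Reaches (fun e => P e ∧ e ∈ G.edgesIn (G.component P z)) z u := fun u hu =>
    Reaches.induction hu (reaches_refl G _ z) fun e a b he hl ha ih =>
      ih.trans (hl.reaches ⟨he, hl.mem_edgesIn_iff.2 ⟨ha, hl.mem_component he ha⟩⟩)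
  exact fun u hu v hv => (from_root u hu).symm.trans (from_root v hv)

lemma ConnectedVia.finite [Finite E] (h : G.ConnectedVia P) : Finite V := by
  obtain ⟨⟨r⟩, hr⟩ := h
  refine Set.finite_univ_iff.1 <|
    (((Set.finite_range G.src).union (Set.finite_range G.tgt)).insert r).subset fun v _ => ?_
  refine (hr r v).induction (Set.mem_insert r _) fun e a b _ hl _ _ => Or.inr ?_
  rcases hl with ⟨-, rfl⟩ | ⟨rfl, -⟩
  · exact Or.inr ⟨e, rfl⟩
  · exact Or.inl ⟨e, rfl⟩

/-! ### Edges entering a vertex set -/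

/-- The edge `e` crosses the boundary of `W`, and `b` is its endpoint in `W`. -/
def Enters (G : Multigraph V E) (W : Set V) (e : E) (b : V) : Prop :=
  b ∈ W ∧ ∃ a ∉ W, G.IsLink e a b

lemma Enters.exists_compl (h : G.Enters W e b) : ∃ a, G.Enters Wᶜ e a ∧ G.IsLink e a b := by
  obtain ⟨hb, a, ha, hl⟩ := h
  exact ⟨a, ⟨ha, b, not_not.2 hb, hl.symm⟩, hl⟩

lemma Enters.unique (h : G.Enters W e b) (h' : G.Enters W e c) : b = c := by
  obtain ⟨hb, a, ha, hl⟩ := h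
  obtain ⟨hc, a', ha', hl'⟩ := h'
  rcases hl with ⟨rfl, rfl⟩ | ⟨rfl, rfl⟩ <;> rcases hl' with ⟨_, _⟩ | ⟨_, _⟩ <;> grind

lemma mem_cutEdges_iff : e ∈ G.cutEdges W ↔ ∃ b, G.Enters W e b := by
  constructor
  · rintro (⟨hs, ht⟩ | ⟨hs, ht⟩)
    · exact ⟨_, hs, _, ht, Or.inr ⟨rfl, rfl⟩⟩
    · exact ⟨_, ht, _, hs, Or.inl ⟨rfl, rfl⟩⟩
  · rintro ⟨b, hb, a, ha, ⟨rfl, rfl⟩ | ⟨rfl, rfl⟩⟩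
    · exact Or.inr ⟨ha, hb⟩
    · exact Or.inl ⟨hb, ha⟩

lemma Enters.mem_cutEdges (h : G.Enters W e b) : e ∈ G.cutEdges W :=
  mem_cutEdges_iff.2 ⟨b, h⟩

lemma Enters.mem_cutEdges_of_compl (h : G.Enters Wᶜ e b) : e ∈ G.cutEdges W := by
  obtain ⟨a, ha, -⟩ := h.exists_compl
  rw [compl_compl] at ha
  exact ha.mem_cutEdges

lemma Enters.notMem_edgesIn (h : G.Enters W e b) : e ∉ G.edgesIn W := by
  obtain ⟨-, a, ha, hl⟩ := h
  exact fun he => ha (hl.mem_edgesIn_iff.1 he).1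

lemma Reaches.avoids_or_exists_enters (h : G.Reaches P u v) (hu : u ∉ B) :
    (v ∉ B ∧ G.Reaches (fun e => P e ∧ e ∉ G.cutEdges B) u v) ∨
      ∃ g a, P g ∧ G.Enters Bᶜ g a ∧ G.Reaches (fun e => P e ∧ e ∉ G.cutEdges B) u a := by
  refine h.induction (motive := fun v => (v ∉ B ∧ _) ∨ _)
    (Or.inl ⟨hu, reaches_refl G _ u⟩) fun e a b he hl _ ih => ?_
  rcases ih with ⟨ha, hua⟩ | hentry
  · by_cases hb : b ∈ B
    · exact Or.inr ⟨e, a, he, ⟨ha, b, not_not.2 hb, hl.symm⟩, hua⟩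
    · refine Or.inl ⟨hb, hua.trans (hl.reaches ⟨he, fun hcut => ?_⟩)⟩
      rcases hl with ⟨rfl, rfl⟩ | ⟨rfl, rfl⟩ <;> rcases hcut with hcut | hcut
      exacts [ha hcut.1, hb hcut.2, hb hcut.1, ha hcut.2]
  · exact Or.inr hentry

lemma Reaches.exists_mem_cutEdges (h : G.Reaches P u v) (hu : u ∉ B) (hv : v ∈ B) :
    ∃ e ∈ G.cutEdges B, P e := by
  rcases h.avoids_or_exists_enters hu with ⟨hvB, -⟩ | ⟨e, a, he, ha, -⟩
  · exact absurd hv hvB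
  · exact ⟨e, ha.mem_cutEdges_of_compl, he⟩

lemma EdgeConnected.le_ncard_cutEdges {k : ℕ} (hG : G.EdgeConnected k) (hu : u ∉ W)
    (hv : v ∈ W) : k ≤ (G.cutEdges W).ncard := by
  by_contra! hlt
  obtain ⟨e, he, he'⟩ := ((hG _ hlt).2 u v).exists_mem_cutEdges hu hv
  exact he' he

/-! ### Nonseparating connections between boundary edges -/

/-- The edges of `F` connect the endpoints in `W` of two distinct boundary edges of `W`. -/
def LinksBoundary (G : Multigraph V E) (W : Set V) (F : Set E) : Prop :=
  ∃ d p d' p', d ≠ d' ∧ G.Enters W d p ∧ G.Enters W d' p' ∧ G.Reaches (· ∈ F) p p'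

/-- The connection that starts with the boundary edge `d`, ending in `p`, and continues in `F`
enters `B` through `g` for the first time; this is `d` itself if `p` already lies in `B`. -/
def FirstEntry (G : Multigraph V E) (F : Set E) (B : Set V) (d : E) (p : V) (g : E) : Prop :=
  (p ∈ B ∧ g = d) ∨ (p ∉ B ∧ g ∈ F ∧
    ∃ a, G.Enters Bᶜ g a ∧ G.Reaches (fun e => e ∈ F ∧ e ∉ G.cutEdges B) p a)

/-- The edge set obtained from `F` by deleting `e` and allowing arbitrary detours inside `B`. -/
def reroute (G : Multigraph V E) (F : Set E) (B : Set V) (e : E) : Set E :=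
  F \ {e} ∪ G.edgesIn B

lemma exists_firstEntry (G : Multigraph V E) (d : E) (h : G.Reaches (· ∈ F) p p')
    (havoid : ¬ G.Reaches (fun e => e ∈ F ∧ e ∉ G.cutEdges B) p p') :
    ∃ g, G.FirstEntry F B d p g := by
  by_cases hp : p ∈ B
  · exact ⟨d, Or.inl ⟨hp, rfl⟩⟩
  · rcases h.avoids_or_exists_enters hp with ⟨-, h'⟩ | ⟨g, a, hg, ha, hpa⟩
    · exact absurd h' havoid
    · exact ⟨g, Or.inr ⟨hp, hg, a, ha, hpa⟩⟩

lemma FirstEntry.reaches (hg : G.FirstEntry F B d p g) (hB : G.ConnectedOn B fun _ => True)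
    (he : e ∈ G.cutEdges B) (heg : e ≠ g) (hw : w ∈ B) :
    G.Reaches (· ∈ G.reroute F B e) p w := by
  have within : ∀ u ∈ B, G.Reaches (· ∈ G.reroute F B e) u w := fun u hu =>
    (hB u hu w hw).mono fun _ h => Or.inr h.2
  rcases hg with ⟨hp, -⟩ | ⟨-, hgF, a, ha, hpa⟩
  · exact within p hp
  · obtain ⟨b, hb, hl⟩ := ha.exists_compl
    rw [compl_compl] at hb
    have to_entry : G.Reaches (· ∈ G.reroute F B e) p a :=
      hpa.mono fun _ h => Or.inl ⟨h.1, fun h' => h.2 (h' ▸ he)⟩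
    exact to_entry.trans ((hl.symm.reaches (Or.inl ⟨hgF, Ne.symm heg⟩)).trans (within b hb.1))

lemma eq_or_eq_firstEntry_of_not_linksBoundary_reroute (hB : G.ConnectedOn B fun _ => True)
    (hdd : d ≠ d') (hd : G.Enters W d p) (hd' : G.Enters W d' p')
    (hg : G.FirstEntry F B d p g) (hg' : G.FirstEntry F B d' p' g') (he : e ∈ G.cutEdges B)
    (hreroute : ¬ G.LinksBoundary W (G.reroute F B e)) : e = g ∨ e = g' := by
  by_contra! hne
  obtain ⟨w, hw, -⟩ := mem_cutEdges_iff.1 he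
  exact hreroute ⟨d, p, d', p', hdd, hd, hd',
    (hg.reaches hB he hne.1 hw).trans (hg'.reaches hB he hne.2 hw).symm⟩

lemma eq_firstEntry_of_notMem_edgesIn (hBW : B ⊆ W) (hB : G.ConnectedOn B fun _ => True)
    (hdd : d ≠ d') (hd : G.Enters W d p) (hd' : G.Enters W d' p') (hg : G.FirstEntry F B d p f)
    (hg' : G.FirstEntry F B d' p' g') (hf : f ∈ G.cutEdges B ∩ G.edgesIn W)
    (hreroute : ¬ G.LinksBoundary W (G.reroute F B f))
    (he : e ∈ G.cutEdges B) (heW : e ∉ G.edgesIn W) : e = g' := by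
  obtain ⟨w, hw, a, -, hl⟩ := mem_cutEdges_iff.1 he
  have hew : G.Enters W e w :=
    ⟨hBW hw, a, fun haW => heW (hl.mem_edgesIn_iff.2 ⟨haW, hBW hw⟩), hl⟩
  have hfg' : f ≠ g' := by
    rintro rfl
    rcases hg with ⟨-, rfl⟩ | ⟨-, -, a₁, ha₁, hpa₁⟩
    · exact hd.notMem_edgesIn hf.2
    rcases hg' with ⟨-, rfl⟩ | ⟨-, -, a₂, ha₂, hpa₂⟩
    · exact hd'.notMem_edgesIn hf.2
    obtain rfl := ha₁.unique ha₂
    exact hreroute ⟨d, p, d', p', hdd, hd, hd', (hpa₁.trans hpa₂.symm).mono fun _ h =>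
      Or.inl ⟨h.1, fun h' => h.2 (h' ▸ hf.1)⟩⟩
  have hed' : e = d' := by
    by_contra hne
    exact hreroute ⟨d', p', e, w, Ne.symm hne, hd', hew, hg'.reaches hB hf.1 hfg' hw⟩
  obtain rfl := hed'
  obtain rfl := hew.unique hd'
  rcases hg' with ⟨-, rfl⟩ | ⟨hp', -⟩
  · rfl
  · exact absurd hw hp'

lemma ncard_cutEdges_le_two (hBW : B ⊆ W) (hB : G.ConnectedOn B fun _ => True)
    (hF : G.LinksBoundary W F) (hne : (G.cutEdges B ∩ G.edgesIn W).Nonempty)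
    (hreroute : ∀ e ∈ G.cutEdges B ∩ G.edgesIn W,
      ¬ G.LinksBoundary W (G.reroute F B e)) : (G.cutEdges B).ncard ≤ 2 := by
  obtain ⟨d, p, d', p', hdd, hd, hd', hpp⟩ := hF
  obtain ⟨f, hf⟩ := hne
  have havoid : ¬ G.Reaches (fun e => e ∈ F ∧ e ∉ G.cutEdges B) p p' := fun h =>
    hreroute f hf ⟨d, p, d', p', hdd, hd, hd', h.mono fun _ h =>
      Or.inl ⟨h.1, fun h' => h.2 (h' ▸ hf.1)⟩⟩
  obtain ⟨g, hg⟩ := exists_firstEntry G d hpp havoid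
  obtain ⟨g', hg'⟩ := exists_firstEntry G d' hpp.symm fun h => havoid h.symm
  have hsub : G.cutEdges B ⊆ {g, g'} := by
    intro e he
    by_cases heW : e ∈ G.edgesIn W
    · exact eq_or_eq_firstEntry_of_not_linksBoundary_reroute hB hdd hd hd' hg hg' he
        (hreroute e ⟨he, heW⟩)
    rcases eq_or_eq_firstEntry_of_not_linksBoundary_reroute hB hdd hd hd' hg hg' hf.1
        (hreroute f hf) with rfl | rfl
    · exact Or.inr (eq_firstEntry_of_notMem_edgesIn hBW hB hdd hd hd' hg hg' hf
        (hreroute f hf) he heW)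
    · exact Or.inl (eq_firstEntry_of_notMem_edgesIn hBW hB hdd.symm hd' hd hg' hg hf
        (hreroute f hf) he heW)
  calc (G.cutEdges B).ncard ≤ ({g, g'} : Set E).ncard := Set.ncard_le_ncard hsub
    _ ≤ ({g'} : Set E).ncard + 1 := Set.ncard_insert_le g _
    _ = 2 := by rw [Set.ncard_singleton]

lemma component_ssubset_of_reroute (hz : z ∈ W)
    (hBW : B ⊆ W \ G.component (fun e => e ∉ F ∧ e ∈ G.edgesIn W) z)
    (hl : G.IsLink f a b) (ha : a ∈ G.component (fun e => e ∉ F ∧ e ∈ G.edgesIn W) z)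
    (hb : b ∈ B) :
    G.component (fun e => e ∉ F ∧ e ∈ G.edgesIn W) z ⊂
      G.component (fun e => e ∉ G.reroute F B f ∧ e ∈ G.edgesIn W) z := by
  set K := G.component (fun e => e ∉ F ∧ e ∈ G.edgesIn W) z
  have hKW : K ⊆ W := component_subset hz fun _ he => he.2
  have notMem_edgesIn : ∀ {e u v}, G.IsLink e u v → u ∈ K → e ∉ G.edgesIn B := fun hl hu he =>
    (hBW (hl.mem_edgesIn_iff.1 he).1).2 hu
  have hsub : K ⊆ G.component (fun e => e ∉ G.reroute F B f ∧ e ∈ G.edgesIn W) z :=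
    fun u hu => Reaches.induction (motive := (· ∈ G.component _ z)) hu (self_mem_component G _ z)
      fun e c c' he hl' hc ih => hl'.mem_component
        ⟨fun h => h.elim (fun h => he.1 h.1) (notMem_edgesIn hl' hc), he.2⟩ ih
  refine ⟨hsub, fun h => (hBW hb).2 (h (hl.mem_component ⟨fun hf => ?_, ?_⟩ (hsub ha)))⟩
  · exact hf.elim (fun hf => hf.2 rfl) (notMem_edgesIn hl ha)
  · exact hl.mem_edgesIn_iff.2 ⟨hKW ha, (hBW hb).1⟩

lemma exists_linksBoundary_maximal [Finite E] (hG : G.EdgeConnected 3) (hz : z ∈ W)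
    (hv : v ∉ W) (hW : G.ConnectedOn W fun _ => True) :
    ∃ F, MaximalFor (fun F => F ⊆ G.edgesIn W ∧ G.LinksBoundary W F)
      (fun F => G.component (fun e => e ∉ F ∧ e ∈ G.edgesIn W) z) F := by
  refine Set.Finite.exists_maximalFor _ {F | F ⊆ G.edgesIn W ∧ G.LinksBoundary W F}
    (Set.toFinite _) ⟨G.edgesIn W, subset_rfl, ?_⟩
  have hcut : 1 < (G.cutEdges W).ncard := lt_of_lt_of_le (by decide) (hG.le_ncard_cutEdges hv hz)
  obtain ⟨d, hd, d', hd', hdd⟩ := (Set.one_lt_ncard (Set.toFinite _)).1 hcut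
  obtain ⟨p, hp⟩ := mem_cutEdges_iff.1 hd
  obtain ⟨p', hp'⟩ := mem_cutEdges_iff.1 hd'
  exact ⟨d, p, d', p', hdd, hp, hp', (hW p hp.1 p' hp'.1).mono fun _ h => h.2⟩

theorem exists_linksBoundary_nonseparating [Finite E] (hG : G.EdgeConnected 3)
    (hz : z ∈ W) (hv : v ∉ W) (hW : G.ConnectedOn W fun _ => True) :
    ∃ F ⊆ G.edgesIn W, G.LinksBoundary W F ∧ G.ConnectedOn W (· ∉ F) := by
  obtain ⟨F, ⟨hFW, hF⟩, hmax⟩ := exists_linksBoundary_maximal hG hz hv hW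
  set K := G.component (fun e => e ∉ F ∧ e ∈ G.edgesIn W) z
  suffices hWK : W ⊆ K from
    ⟨F, hFW, hF, fun u hu v hv => Reaches.trans (Reaches.symm (hWK hu)) (hWK hv)⟩
  by_contra hWK
  obtain ⟨b₀, hb₀W, hb₀K⟩ := Set.not_subset.1 hWK
  set B := G.component (· ∈ G.edgesIn (W \ K)) b₀
  have hb₀B : b₀ ∈ B := self_mem_component G _ b₀
  have hBWK : B ⊆ W \ K := component_subset ⟨hb₀W, hb₀K⟩ fun _ he => he
  have hBW : B ⊆ W := fun u hu => (hBWK hu).1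
  have hzB : z ∉ B := fun h => (hBWK h).2 (self_mem_component G _ z)
  have hreroute : ∀ e ∈ G.cutEdges B ∩ G.edgesIn W,
      ¬ G.LinksBoundary W (G.reroute F B e) := by
    rintro e ⟨he, heW⟩ hlinks
    obtain ⟨b, hb, a, ha, hl⟩ := mem_cutEdges_iff.1 he
    have haW : a ∈ W := (hl.mem_edgesIn_iff.1 heW).1
    have haK : a ∈ K := by
      by_contra haK
      exact ha (hl.symm.mem_component (hl.mem_edgesIn_iff.2 ⟨⟨haW, haK⟩, hBWK hb⟩) hb)
    have hlt := component_ssubset_of_reroute hz hBWK hl haK hb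
    exact hlt.2 (hmax ⟨Set.union_subset (Set.sdiff_subset.trans hFW) (edgesIn_mono hBW), hlinks⟩
      hlt.1)
  have hne : (G.cutEdges B ∩ G.edgesIn W).Nonempty := by
    obtain ⟨e, he, -, heW⟩ := (hW z hz b₀ hb₀W).exists_mem_cutEdges hzB hb₀B
    exact ⟨e, he, heW⟩
  have hBconn : G.ConnectedOn B fun _ => True :=
    (connectedOn_component G _ b₀).mono fun _ _ => trivial
  have hle := ncard_cutEdges_le_two hBW hBconn hF hne hreroute
  have hge := hG.le_ncard_cutEdges hzB hb₀B
  omega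

/-! ### Boundaries of edge functions -/

section Boundary

variable [Fintype E] {Γ Δ : Type} [AddCommGroup Γ] [AddCommGroup Δ] {φ : E → Γ}

/-- The net outflow of `φ` at each vertex. -/
noncomputable def boundary (G : Multigraph V E) : (E → Γ) →+ (V → Γ) where
  toFun φ v := (∑ e, if G.src e = v then φ e else 0) - ∑ e, if G.tgt e = v then φ e else 0
  map_zero' := by ext; simp
  map_add' φ ψ := by
    ext v
    simp only [Pi.add_apply, ite_add_zero, Finset.sum_add_distrib]
    abel

lemma boundary_apply (φ : E → Γ) (v : V) : G.boundary φ v =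
    (∑ e, if G.src e = v then φ e else 0) - ∑ e, if G.tgt e = v then φ e else 0 := rfl

lemma isFlow_iff : G.IsFlow φ ↔ ∀ v, G.boundary φ v = 0 := by
  simp only [IsFlow, boundary_apply, sub_eq_zero]

lemma IsFlow.map_s8 (h : G.IsFlow φ) (g : Γ →+ Δ) : G.IsFlow fun e => g (φ e) := fun v => by
  simpa only [map_sum, apply_ite g, map_zero] using congrArg g (h v)

lemma IsFlow.prodMk {ψ : E → Δ} (hφ : G.IsFlow φ) (hψ : G.IsFlow ψ) :
    G.IsFlow fun e => (φ e, ψ e) := fun v => by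
  refine Prod.ext ?_ ?_
  · simpa only [Prod.fst_sum, apply_ite Prod.fst, Prod.fst_zero] using hφ v
  · simpa only [Prod.snd_sum, apply_ite Prod.snd, Prod.snd_zero] using hψ v

lemma sum_boundary [Fintype V] (φ : E → Γ) : ∑ v, G.boundary φ v = 0 := by
  simp only [boundary_apply, Finset.sum_sub_distrib]
  rw [Finset.sum_comm, Finset.sum_comm (γ := V)]
  simp

lemma isFlow_of_boundary_eq_zero [Finite V] (r : V) (h : ∀ v, v ≠ r → G.boundary φ v = 0) :
    G.IsFlow φ := by
  have := Fintype.ofFinite V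
  refine isFlow_iff.2 fun v => ?_
  by_cases hv : v = r
  · rw [hv, ← sum_boundary (G := G) φ, Finset.sum_eq_single r (fun u _ hu => h u hu) (by simp)]
  · exact h v hv

lemma boundary_single (e : E) (x : Γ) : G.boundary (Pi.single e x) =
    Pi.single (G.src e) x - Pi.single (G.tgt e) x := by
  ext v
  rw [boundary_apply, Finset.sum_eq_single e (by intros; simp_all) (by simp),
    Finset.sum_eq_single e (by intros; simp_all) (by simp)]
  simp [Pi.single_apply, eq_comm]

lemma IsLink.exists_boundary_single (Γ : Type) [AddCommGroup Γ] (h : G.IsLink e a b) :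
    ∃ σ : ℤˣ, ∀ x : Γ,
      G.boundary (Pi.single e (σ • x)) = Pi.single a x - Pi.single b x := by
  rcases h with ⟨rfl, rfl⟩ | ⟨rfl, rfl⟩
  · exact ⟨1, fun x => by rw [one_smul, boundary_single]⟩
  · refine ⟨-1, fun x => ?_⟩
    rw [Units.neg_smul, one_smul, boundary_single, Pi.single_neg, Pi.single_neg]
    abel

lemma Reaches.exists_boundary_eq (h : G.Reaches P u v) (x : Γ) : ∃ ψ : E → Γ,
    (∀ e, ¬ P e → ψ e = 0) ∧ G.boundary ψ = Pi.single u x - Pi.single v x := by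
  refine h.induction (motive := fun v => ∃ ψ : E → Γ, (∀ e, ¬ P e → ψ e = 0) ∧
    G.boundary ψ = Pi.single u x - Pi.single v x) ⟨0, by simp, by simp⟩ ?_
  rintro e a b he hl - ⟨ψ, hψ, hψb⟩
  obtain ⟨σ, hσ⟩ := hl.exists_boundary_single Γ
  refine ⟨ψ + Pi.single e (σ • x), fun e' he' => ?_, ?_⟩
  · have hne : e' ≠ e := fun h => he' (h ▸ he)
    simp [hψ e' he', hne]
  · rw [map_add, hψb, hσ]
    abel

lemma exists_boundary_eq_of_reaches [Finite V] (D : V → Γ)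
    (hD : ∀ v, D v ≠ 0 → G.Reaches P v r) :
    ∃ ψ : E → Γ, (∀ e, ¬ P e → ψ e = 0) ∧ ∀ v, v ≠ r → G.boundary ψ v = D v := by
  have := Fintype.ofFinite V
  have route : ∀ v, ∃ ψ : E → Γ, (∀ e, ¬ P e → ψ e = 0) ∧
      G.boundary ψ = Pi.single v (D v) - Pi.single r (D v) := fun v => by
    by_cases hv : D v = 0
    · exact ⟨0, by simp, by simp [hv]⟩
    · exact (hD v hv).exists_boundary_eq (D v)
  choose ψ hψ hψb using route
  refine ⟨∑ v, ψ v, fun e he => ?_, fun v hv => ?_⟩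
  · rw [Finset.sum_apply]
    exact Finset.sum_eq_zero fun v _ => hψ v e he
  · rw [map_sum, Finset.sum_congr rfl fun v _ => hψb v, Finset.sum_sub_distrib,
      Finset.univ_sum_single, Pi.sub_apply, Finset.sum_apply]
    simp [hv]

lemma Peripheral.exists_isFlow [Nontrivial Γ] (h : G.Peripheral S) (f : E → Γ) :
    ∃ φ : E → Γ, G.IsFlow φ ∧ ∀ e ∈ S, φ e ≠ f e := by
  have : Finite V := ConnectedVia.finite h
  obtain ⟨⟨r⟩, hr⟩ := h
  obtain ⟨x, hx⟩ := exists_ne (0 : Γ)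
  obtain ⟨ψ, hψ, hψb⟩ := exists_boundary_eq_of_reaches (-G.boundary fun e => f e + x)
    fun v _ => hr v r
  refine ⟨(fun e => f e + x) + ψ, isFlow_of_boundary_eq_zero r fun v hv => ?_, fun e he => ?_⟩
  · rw [map_add, Pi.add_apply, hψb v hv, Pi.neg_apply, add_neg_cancel]
  · simp [hψ e (not_not.2 he), hx]

/-! ### Ears -/

/-- `F` is the edge set of a connected subgraph on `Q`, and two distinct edges join `Q` to `X`. -/
def IsEar (G : Multigraph V E) (X Q : Set V) (F : Set E) : Prop :=
  F ⊆ G.edgesIn Q ∧ G.ConnectedOn Q (· ∈ F) ∧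
    ∃ d p d' p', d ≠ d' ∧ G.Enters Xᶜ d p ∧ G.Enters Xᶜ d' p' ∧ p ∈ Q ∧ p' ∈ Q

/-- Every prescribed edge function over `Γ` can be avoided on `T` by a function conserved off `X`,
that is, by a flow of `G / X`. For `X = ∅` and `T = univ` this is `Γ`-connectivity of `G`. -/
def ConnectedModOn (G : Multigraph V E) (Γ : Type) [AddCommGroup Γ] (X : Set V) (T : Set E) :
    Prop :=
  ∀ f : E → Γ, ∃ φ : E → Γ, (∀ v ∉ X, G.boundary φ v = 0) ∧ ∀ e ∈ T, φ e ≠ f e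

lemma exists_circulation (hd : G.Enters Xᶜ d p) (hd' : G.Enters Xᶜ d' p')
    (h : G.Reaches (· ∈ F) p p') (hdd : d ≠ d') :
    ∃ σ τ : ℤˣ, ∀ x : Γ, ∃ θ : E → Γ, (∀ v ∉ X, G.boundary θ v = 0) ∧
      (d ∉ F → θ d = σ • x) ∧ (d' ∉ F → θ d' = τ • x) ∧
      ∀ e ∉ F, e ≠ d → e ≠ d' → θ e = 0 := by
  obtain ⟨-, q, hq, hl⟩ := hd
  obtain ⟨-, q', hq', hl'⟩ := hd'
  obtain ⟨σ, hσ⟩ := hl.exists_boundary_single Γ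
  obtain ⟨τ, hτ⟩ := hl'.symm.exists_boundary_single Γ
  refine ⟨σ, τ, fun x => ?_⟩
  obtain ⟨χ, hχ, hχb⟩ := h.exists_boundary_eq x
  refine ⟨Pi.single d (σ • x) + χ + Pi.single d' (τ • x), fun v hv => ?_, fun hdF => ?_,
    fun hdF => ?_, fun e heF hed hed' => ?_⟩
  · have hvq : v ≠ q := fun h => hq (h ▸ hv)
    have hvq' : v ≠ q' := fun h => hq' (h ▸ hv)
    rw [map_add, map_add, hσ, hχb, hτ]
    simp [hvq, hvq']
  · simp [hχ d hdF, hdd]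
  · simp [hχ d' hdF, hdd.symm]
  · simp [hχ e heF, hed, hed']

lemma exists_conserved_of_connectedOn [Finite V] (hQ : G.ConnectedOn Q (· ∈ F))
    (hd : G.Enters Xᶜ d p) (hp : p ∈ Q) (hφ : ∀ v ∉ X ∪ Q, G.boundary φ v = 0) :
    ∃ φ' : E → Γ, (∀ v ∉ X, G.boundary φ' v = 0) ∧ ∀ e ∉ F, e ≠ d → φ' e = φ e := by
  obtain ⟨q, ⟨hq, -⟩, hl⟩ := hd.exists_compl
  rw [compl_compl] at hq
  have route : ∀ v ∈ Q, G.Reaches (fun e => e ∈ F ∨ e = d) v q := fun v hv =>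
    ((hQ v hv p hp).mono fun _ he => Or.inl he.1).trans (hl.symm.reaches (Or.inr rfl))
  obtain ⟨ψ, hψ, hψb⟩ := exists_boundary_eq_of_reaches
    (fun v => if v ∈ Q then -G.boundary φ v else 0) fun v hv =>
      route v (by by_contra hvQ; exact hv (if_neg hvQ))
  refine ⟨φ + ψ, fun v hv => ?_, fun e heF hed => ?_⟩
  · rw [map_add, Pi.add_apply, hψb v fun h => hv (h ▸ hq)]
    split_ifs with hvQ
    · exact add_neg_cancel _
    · rw [hφ v (not_or.2 ⟨hv, hvQ⟩), add_zero]
  · rw [Pi.add_apply, hψ e (not_or.2 ⟨heF, hed⟩), add_zero]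

lemma IsEar.connectedModOn [Finite V] (hear : G.IsEar X Q F) (hΓ : 3 ≤ ENat.card Γ)
    {T : Set E} (hFT : Disjoint F T) (h : G.ConnectedModOn Γ (X ∪ Q) T) :
    G.ConnectedModOn Γ X T := by
  intro f
  obtain ⟨φ₀, hφ₀, hφ₀f⟩ := h f
  obtain ⟨-, hQ, d, p, d', p', hdd, hd, hd', hp, hp'⟩ := hear
  obtain ⟨φ, hφ, hφφ₀⟩ := exists_conserved_of_connectedOn hQ hd hp hφ₀
  have hpp : G.Reaches (· ∈ F) p p' := (hQ p hp p' hp').mono fun _ h => h.1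
  obtain ⟨σ, τ, hθ⟩ := exists_circulation (Γ := Γ) hd hd' hpp hdd
  obtain ⟨x, hx, hx'⟩ := ENat.exists_ne_ne_of_three_le hΓ
    (σ⁻¹ • (f d - φ d)) (τ⁻¹ • (f d' - φ d'))
  rw [Ne, eq_inv_smul_iff, eq_sub_iff_add_eq'] at hx hx'
  obtain ⟨θ, hθb, hθd, hθd', hθ⟩ := hθ x
  refine ⟨φ + θ, fun v hv => ?_, fun e heT => ?_⟩
  · rw [map_add, Pi.add_apply, hφ v hv, hθb v hv, add_zero]
  have heF : e ∉ F := hFT.notMem_of_mem_right heT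
  rw [Pi.add_apply]
  by_cases hed : e = d
  · subst hed
    rwa [hθd heF]
  by_cases hed' : e = d'
  · subst hed'
    rwa [hθd' heF]
  · rw [hθ e heF hed hed', add_zero, hφφ₀ e heF hed]
    exact hφ₀f e heT

end Boundary

/-! ### Peripheral unions of ears -/

lemma Peripheral.union_of_connectedOn (hS : G.Peripheral S) (hF : F ⊆ G.edgesIn W)
    (hW : G.ConnectedOn W (· ∉ F)) (hSW : Disjoint S (G.edgesIn W)) :
    G.Peripheral (S ∪ F) := by
  refine ⟨hS.1, fun u v => (hS.2 u v).bind fun e he => ?_⟩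
  by_cases heF : e ∈ F
  · refine (hW _ (hF heF).1 _ (hF heF).2).mono fun g hg => ?_
    exact not_or.2 ⟨hSW.notMem_of_mem_right hg.2, hg.1⟩
  · exact (isLink_src_tgt G e).reaches (not_or.2 ⟨he, heF⟩)

lemma Peripheral.mono (h : S ⊆ F) (hF : G.Peripheral F) : G.Peripheral S :=
  ⟨hF.1, fun u v => (hF.2 u v).mono fun _ he he' => he (h he')⟩

lemma Enters.of_component (h : G.Enters (G.component (· ∈ G.edgesIn X) v) e b) (hv : v ∈ X) :
    G.Enters X e b := by
  obtain ⟨hb, a, ha, hl⟩ := h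
  have hbX : b ∈ X := component_subset hv (fun _ he => he) hb
  exact ⟨hbX, a, fun haX => ha (hl.symm.mem_component (hl.mem_edgesIn_iff.2 ⟨haX, hbX⟩) hb), hl⟩

lemma exists_isEar [Finite E] (hG : G.EdgeConnected 3) (hX : X.Nonempty) (hv : v ∉ X)
    (hS : S ⊆ G.edgesIn X) (hSper : G.Peripheral S) :
    ∃ Q F, G.IsEar X Q F ∧ G.Peripheral (S ∪ F) := by
  set W := G.component (· ∈ G.edgesIn Xᶜ) v
  have hWX : W ⊆ Xᶜ := component_subset hv fun _ he => he
  have hW : G.ConnectedOn W fun _ => True :=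
    (connectedOn_component G _ v).mono fun _ _ => trivial
  obtain ⟨x, hx⟩ := hX
  obtain ⟨F, hFW, ⟨d, p, d', p', hdd, hd, hd', hpp⟩, hF⟩ :=
    exists_linksBoundary_nonseparating hG (self_mem_component G _ v) (fun h => hWX h hx) hW
  have hSW : Disjoint S (G.edgesIn W) :=
    Set.disjoint_left.2 fun e heS heW => hWX heW.1 (hS heS).1
  refine ⟨G.component (· ∈ F) p, F ∩ G.edgesIn (G.component (· ∈ F) p),
    ⟨Set.inter_subset_right, fun u hu w hw => ?_, d, p, d', p', hdd, hd.of_component hv,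
      hd'.of_component hv, self_mem_component G _ p, hpp⟩, ?_⟩
  · exact (connectedOn_component G _ p u hu w hw).mono fun e he => ⟨he, he.2⟩
  · exact (hSper.union_of_connectedOn hFW hF hSW).mono
      (Set.union_subset_union_right S Set.inter_subset_left)

theorem exists_peripheral_superset [Fintype E] {Γ : Type} [AddCommGroup Γ]
    (hΓ : 3 ≤ ENat.card Γ) (hG : G.EdgeConnected 3) (hX : X.Nonempty) (hS : S ⊆ G.edgesIn X)
    (hSper : G.Peripheral S) :
    ∃ S', S ⊆ S' ∧ G.Peripheral S' ∧ G.ConnectedModOn Γ X S'ᶜ := by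
  have : Finite V := ConnectedVia.finite hSper
  induction X using WellFoundedGT.induction generalizing S with
  | _ X ih =>
  by_cases hXuniv : X = Set.univ
  · subst hXuniv
    have : Nontrivial Γ :=
      (ENat.one_lt_card_iff_nontrivial Γ).1 (lt_of_lt_of_le (by norm_num) hΓ)
    obtain ⟨x, hx⟩ := exists_ne (0 : Γ)
    exact ⟨S, subset_rfl, hSper, fun f => ⟨fun e => f e + x, by simp, fun e _ => by simp [hx]⟩⟩
  obtain ⟨v, hv⟩ := (Set.ne_univ_iff_exists_notMem X).1 hXuniv
  obtain ⟨Q, F, hear, hper⟩ := exists_isEar hG hX hv hS hSper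
  obtain ⟨hFQ, -, d, p, _, _, -, hd, -, hp, -⟩ := id hear
  have hlt : X < X ∪ Q := ⟨Set.subset_union_left, fun h => hd.1 (h (Or.inr hp))⟩
  obtain ⟨S', hSS', hS', hconn⟩ := ih (X ∪ Q) hlt (hX.mono hlt.1)
    (Set.union_subset (hS.trans (edgesIn_mono hlt.1))
      (hFQ.trans (edgesIn_mono Set.subset_union_right))) hper
  have hFS' : Disjoint F S'ᶜ :=
    Set.disjoint_compl_right_iff_subset.2 (Set.subset_union_right.trans hSS')
  exact ⟨S', Set.subset_union_left.trans hSS', hS', hear.connectedModOn hΓ hFS' hconn⟩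

theorem exists_peripheral_isFlow [Fintype E] {Γ : Type} [AddCommGroup Γ]
    (hΓ : 3 ≤ ENat.card Γ) (hG : G.EdgeConnected 3) :
    ∃ S, G.Peripheral S ∧ ∀ f : E → Γ, ∃ φ : E → Γ, G.IsFlow φ ∧ ∀ e ∉ S, φ e ≠ f e := by
  have hper : G.Peripheral ∅ := hG ∅ (by simp)
  have : Finite V := ConnectedVia.finite hper
  obtain ⟨r⟩ := hper.1
  obtain ⟨S, -, hS, hflow⟩ :=
    exists_peripheral_superset hΓ hG (Set.singleton_nonempty r) (Set.empty_subset _) hper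
  refine ⟨S, hS, fun f => ?_⟩
  obtain ⟨φ, hφ, hφf⟩ := hflow f
  exact ⟨φ, isFlow_of_boundary_eq_zero r hφ, hφf⟩

end Multigraph

theorem threeEdgeConnected_is_Z6_connected_general {V E Γ₁ Γ₂ : Type} [Fintype E]
    [AddCommGroup Γ₁] [AddCommGroup Γ₂] [Nontrivial Γ₁] (hΓ₂ : 3 ≤ ENat.card Γ₂)
    (G : Multigraph V E) (hG : G.EdgeConnected 3) (f : E → Γ₁ × Γ₂) :
    ∃ φ : E → Γ₁ × Γ₂, G.IsFlow φ ∧ ∀ e, φ e ≠ f e := by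
  obtain ⟨S, hS, hflow⟩ := Multigraph.exists_peripheral_isFlow hΓ₂ hG
  obtain ⟨α, hα, hαf⟩ := hS.exists_isFlow fun e => (f e).1
  obtain ⟨β, hβ, hβf⟩ := hflow fun e => (f e).2
  refine ⟨fun e => (α e, β e), hα.prodMk hβ, fun e he => ?_⟩
  by_cases heS : e ∈ S
  · exact hαf e heS (congrArg Prod.fst he)
  · exact hβf e heS (congrArg Prod.snd he)

/-- Every oriented 3-edge-connected graph is `ℤ₆`-connected: for every `f : E → ℤ₆`
there is a flow `φ` with `φ(e) ≠ f(e)` for every edge `e`. -/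
theorem threeEdgeConnected_is_Z6_connected {V E : Type} [Fintype V] [Fintype E]
    (G : Multigraph V E) (hG : G.EdgeConnected 3) (f : E → ZMod 6) :
    ∃ φ : E → ZMod 6, G.IsFlow φ ∧ ∀ e : E, φ e ≠ f e := by
  let ε : ZMod 6 ≃+* ZMod 2 × ZMod 3 := ZMod.chineseRemainder (show Nat.Coprime 2 3 by decide)
  obtain ⟨φ, hφ, hφf⟩ := threeEdgeConnected_is_Z6_connected_general (by simp) G hG fun e => ε (f e)
  exact ⟨fun e => ε.symm (φ e), hφ.map_s8 ε.symm.toAddMonoidHom, fun e he => hφf e (by simp [← he])⟩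
end
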